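/- Let e be a directed edge of K(2,D) whose edge-word w(e) is unbordered and square-free, and let t be an integer with 1 ≤ t and 2t ≤ D+1. Then Δ_t(e) ≤ ∑_{r ∈ R_t(w(e))} 2^{D−1−(r−t)}. -/

import Mathlib

/-!
Write `w` for the edge-word of `e`. A walk of length `D` using `e` as its `t`-th edge is the
sequence of length-`D` windows of a word `W = P ++ w ++ S` of length `2 * D` without equal
adjacent letters, where `P` has length `t - 1` and `S` has length `D - t`. There are
`2 ^ (D - 1)` such words, encoded here by the two lists of binary choices that extend `w` letter
by letter to the left and to the right (`extend`). The word `W` is the concatenation of the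
endpoints of the walk, so distinct words give distinct pairs.

The walk fails to be a geodesic only if a suffix of its first vertex, of some length `r ≥ 1`, is
a prefix of its last vertex (`word_drop_eq_of_isWalk`), that is, if `W` has a square of period
`r` centred at its midpoint (`CentralSquare`). The midpoint cuts `w` just before its suffix `B`
of length `t`. If `r ≤ t`, the square lies inside `w`, against square-freeness (this is where
`2 * t ≤ D + 1` enters). If `r ≥ D + 1 - t`, comparing the two halves of the square gives a border
of `w` of length `D + 1 - r`. Hence `B` recurs in `w` at distance `r`, so `r ∈ Rt w t`
(`CentralSquare.mem_Rt`). For such an `r` the first `r - t` letters of `S` are determined by `w`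
(`CentralSquare.take_right`), which leaves at most `2 ^ (t - 1) * 2 ^ (D - r)` words. The union
bound over `r` gives the claim.
-/

open scoped BigOperators Classical

namespace Kautz

/-- A vertex of the Kautz digraph `K(d,D)`: a word of length `D` over the
alphabet `{0,1,…,d}` in which adjacent letters are distinct. -/
structure Vertex (d D : ℕ) where
  word : List (Fin (d+1))
  length_eq : word.length = D
  chain : word.Chain' (· ≠ ·)

/-- Adjacency in `K(d,D)`: there is an edge `u → v` iff some word `w` of length
`D+1` with adjacent letters distinct has `u` as its prefix of length `D` and
`v` as its suffix of length `D`. -/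
def Adj {d D : ℕ} (u v : Vertex d D) : Prop :=
  ∃ w : List (Fin (d+1)), w.length = D + 1 ∧ w.Chain' (· ≠ ·) ∧
    u.word = w.dropLast ∧ v.word = w.tail

/-- A directed edge of `K(d,D)`. -/
structure Edge (d D : ℕ) where
  src : Vertex d D
  tgt : Vertex d D
  adj : Adj src tgt

/-- The edge-word `w(e) = a₀a₁⋯a_D` of an edge `e : u → v`, namely `u`
followed by the last letter of `v`. -/
def Edge.word {d D : ℕ} (e : Edge d D) : List (Fin (d+1)) :=
  e.src.word ++ e.tgt.word.drop (D - 1)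

/-- `p` is a walk from `x` to `y`, recorded as the list of successive vertices. -/
def IsWalk {d D : ℕ} (p : List (Vertex d D)) (x y : Vertex d D) : Prop :=
  p.head? = some x ∧ p.getLast? = some y ∧ p.Chain' Adj

/-- Directed graph distance in `K(d,D)`. -/
noncomputable def dist {d D : ℕ} (x y : Vertex d D) : ℕ :=
  sInf {k | ∃ p : List (Vertex d D), IsWalk p x y ∧ p.length = k + 1}

/-- `N(e;k,t)`: the number of ordered pairs `(x,y)` with `dist x y = k` such
that some geodesic (walk of length `k = dist x y`) from `x` to `y` uses `e` as
its `t`-th edge. -/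
noncomputable def N {d D : ℕ} (e : Edge d D) (k t : ℕ) : ℕ :=
  Set.ncard {xy : Vertex d D × Vertex d D |
    dist xy.1 xy.2 = k ∧
    ∃ p : List (Vertex d D), IsWalk p xy.1 xy.2 ∧ p.length = k + 1 ∧
      p[t-1]? = some e.src ∧ p[t]? = some e.tgt}

/-- `U_k(e) = ∑_{t=1}^{k} N(e;k,t)`. -/
noncomputable def U {d D : ℕ} (e : Edge d D) (k : ℕ) : ℕ :=
  ∑ t ∈ Finset.Icc 1 k, N e k t

/-- `cong(e) = ∑_{k=1}^{D} U_k(e)`. -/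
noncomputable def cong {d D : ℕ} (e : Edge d D) : ℕ :=
  ∑ k ∈ Finset.Icc 1 D, U e k

/-- `τ(d,D) = (D−1)·d^{D−2} + D·d^{D−1}`. -/
def tau (d D : ℕ) : ℕ := (D - 1) * d ^ (D - 2) + D * d ^ (D - 1)

/-- A word has a border: some proper nonempty prefix equals the suffix of the
same length. -/
def HasBorder {α : Type*} (w : List α) : Prop :=
  ∃ ℓ, 1 ≤ ℓ ∧ ℓ ≤ w.length - 1 ∧ w.take ℓ = w.drop (w.length - ℓ)

/-- An unbordered word. -/
def Unbordered {α : Type*} (w : List α) : Prop := ¬ HasBorder w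

/-- A square-free word: no nonempty factor of the form `XX`. -/
def SquareFree {α : Type*} (w : List α) : Prop :=
  ¬ ∃ X : List α, X ≠ [] ∧ (X ++ X) <:+: w

/-- A `7/4⁺`-power-free word: no factor `x^k y` with `x` nonempty, `k ≥ 1`,
`y` a prefix of `x`, and `(k·|x| + |y|)/|x| > 7/4`. -/
def SevenFourthsPlusFree {α : Type*} (w : List α) : Prop :=
  ¬ ∃ (x y : List α) (k : ℕ), x ≠ [] ∧ 1 ≤ k ∧ y <+: x ∧
    ((List.replicate k x).flatten ++ y) <:+: w ∧
    7 * x.length < 4 * (k * x.length + y.length)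

/-- A word over `{0,1,…,d}` is ternary if it uses only the letters `{0,1,2}`. -/
def IsTernary {n : ℕ} (w : List (Fin n)) : Prop := ∀ a ∈ w, (a : ℕ) < 3

/-- The suffix of `w` of length `t`. -/
def suffixWord {α : Type*} (w : List α) (t : ℕ) : List α := w.drop (w.length - t)

/-- `R_t(w)`: the set of admissible overlap lengths `r` at position `t`, i.e.
those `r` with `t+1 ≤ r ≤ |w|−t−1` such that `w = A·B·V·B` where `B` is the
suffix of `w` of length `t`, `V` is nonempty, and `|B·V| = r`. -/
noncomputable def Rt {α : Type*} (w : List α) (t : ℕ) : Finset ℕ :=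
  (Finset.Icc (t + 1) (w.length - t - 1)).filter fun r =>
    ∃ A V : List α, V ≠ [] ∧
      w = A ++ suffixWord w t ++ V ++ suffixWord w t ∧ t + V.length = r

/-- The deficit `Δ_t(e) = d^{D−1} − N(e;D,t)`. -/
noncomputable def deficit {d D : ℕ} (e : Edge d D) (t : ℕ) : ℝ :=
  (d : ℝ) ^ (D - 1) - (N e D t : ℝ)

/-- The total deficit `Δ(e) = ∑_{t=1}^{D} Δ_t(e)`. -/
noncomputable def totalDeficit {d D : ℕ} (e : Edge d D) : ℝ :=
  ∑ t ∈ Finset.Icc 1 D, deficit e t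

/-- The weighted overlap count
`Ω_d(e) = ∑_{j=1}^{⌈(D+1)/2⌉} ∑_{r ∈ R_j(w(e))} d^{−(r−j)}`. -/
noncomputable def Omega {d D : ℕ} (e : Edge d D) : ℝ :=
  ∑ j ∈ Finset.Icc 1 ((D + 2) / 2), ∑ r ∈ Rt e.word j, (d : ℝ) ^ ((j : ℤ) - (r : ℤ))

/-- The overlap `ov(u,v)`: the largest `j ≤ D` such that the last `j` letters
of `u` equal the first `j` letters of `v`. -/
noncomputable def ov {d D : ℕ} (u v : Vertex d D) : ℕ :=
  sSup {j | j ≤ D ∧ u.word.drop (D - j) = v.word.take j}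

end Kautz

namespace Kautz

/-! ### Extending a word by binary choices -/

/-- The word over three letters obtained from the letter `a` by successive binary choices: each
new letter is the previous one plus `1` or plus `2`. The letter `a` itself is not included. -/
def extend : Fin 3 → List Bool → List (Fin 3)
  | _, [] => []
  | a, b :: l => (if b then a + 1 else a + 2) :: extend (if b then a + 1 else a + 2) l

@[simp] lemma length_extend (a : Fin 3) (l : List Bool) : (extend a l).length = l.length := by
  induction l generalizing a with
  | nil => rfl
  | cons b l ih => simp [extend, ih]

lemma extend_injective (a : Fin 3) : Function.Injective (extend a) := by
  intro l l' h
  induction l generalizing a l' with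
  | nil => cases l' <;> simp_all [extend]
  | cons b l ih =>
    cases l' with
    | nil => simp [extend] at h
    | cons b' l' =>
      simp only [extend, List.cons.injEq] at h
      have hb : ∀ (a : Fin 3) (b b' : Bool),
          (if b then a + 1 else a + 2) = (if b' then a + 1 else a + 2) → b = b' := by decide
      obtain rfl := hb _ _ _ h.1
      rw [ih _ h.2]

lemma extend_take (a : Fin 3) (l : List Bool) (k : ℕ) :
    extend a (l.take k) = (extend a l).take k := by
  induction l generalizing a k with
  | nil => simp [extend]
  | cons b l ih => cases k <;> simp [extend, ih]

lemma isChain_cons_extend (a : Fin 3) (l : List Bool) :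
    (a :: extend a l).IsChain (· ≠ ·) := by
  induction l generalizing a with
  | nil => simp [extend]
  | cons b l ih =>
    simp only [extend, List.isChain_cons_cons]
    refine ⟨?_, ih _⟩
    revert a b
    decide

lemma isChain_extend_append {w : List (Fin 3)} (hw : w.IsChain (· ≠ ·)) (hne : w ≠ [])
    (l₁ l₂ : List Bool) :
    ((extend (w.head hne) l₁).reverse ++ w ++ extend (w.getLast hne) l₂).IsChain (· ≠ ·) := by
  have hL : ((extend (w.head hne) l₁).reverse ++ [w.head hne]).IsChain (· ≠ ·) := by
    have h := isChain_cons_extend (w.head hne) l₁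
    rw [← List.isChain_reverse] at h
    simp only [List.reverse_cons] at h
    exact h.imp fun _ _ h => h.symm
  have hLw : ((extend (w.head hne) l₁).reverse ++ w).IsChain (· ≠ ·) := by
    have h := List.IsChain.append_overlap (l₂ := [w.head hne]) (l₃ := w.tail) hL
      (by simpa using hw) (by simp)
    simpa using h
  have hLw' : (((extend (w.head hne) l₁).reverse ++ w.dropLast) ++ [w.getLast hne]).IsChain
      (· ≠ ·) := by
    simpa [List.append_assoc, List.dropLast_append_getLast] using hLw
  have h := List.IsChain.append_overlap hLw'
    (by simpa using isChain_cons_extend (w.getLast hne) l₂) (by simp)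
  have e : w = w.dropLast ++ [w.getLast hne] := (List.dropLast_append_getLast hne).symm
  rw [show (extend (w.head hne) l₁).reverse ++ w = (extend (w.head hne) l₁).reverse ++ w.dropLast
    ++ [w.getLast hne] by rw [List.append_assoc, ← e]]
  exact h

/-! ### Walks and words -/

lemma Vertex.word_injective {d D : ℕ} : Function.Injective (Vertex.word (d := d) (D := D)) := by
  rintro ⟨w, _, _⟩ ⟨w', _, _⟩ h
  cases h
  rfl

instance {d D : ℕ} : Finite (Vertex d D) := by
  refine Finite.of_injective (β := List.Vector (Fin (d + 1)) D)
    (fun v => ⟨v.word, v.length_eq⟩) fun u v h => Vertex.word_injective ?_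
  exact congrArg Subtype.val h

lemma Adj.drop_eq {d D : ℕ} {u v : Vertex d D} (h : Adj u v) :
    u.word.drop 1 = v.word.take (D - 1) := by
  obtain ⟨w, hl, -, hu, hv⟩ := h
  rw [hu, hv, List.dropLast_eq_take, List.drop_take, List.drop_one, hl]
  rfl

/-- A walk of length `k` shifts the initial word by `k` letters. -/
lemma word_drop_eq_of_isWalk {d D : ℕ} {p : List (Vertex d D)} {x y : Vertex d D} {k : ℕ}
    (h : IsWalk p x y) (hk : p.length = k + 1) : x.word.drop k = y.word.take (D - k) := by
  induction p generalizing x k with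
  | nil => simp at hk
  | cons u p ih =>
    obtain ⟨h1, h2, h3⟩ := h
    obtain rfl : u = x := by simpa using h1
    cases p with
    | nil =>
      obtain rfl : u = y := by simpa using h2
      obtain rfl : k = 0 := by simpa using hk.symm
      have := u.length_eq
      simp [← this]
    | cons v p =>
      obtain ⟨k, rfl⟩ : ∃ m, k = m + 1 := ⟨p.length, by simpa using hk.symm⟩
      have hc := List.isChain_cons_cons.1 h3
      have := ih (x := v) (k := k) ⟨rfl, by simpa using h2, hc.2⟩ (by simpa using hk)
      rw [Nat.add_comm k 1, ← List.drop_drop, hc.1.drop_eq, List.drop_take, this, List.take_take]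
      congr 1
      omega

/-- The vertex read off from a word `W` of length `2 * D` at position `i`. -/
def window {d D : ℕ} (W : List (Fin (d + 1))) (hl : W.length = 2 * D)
    (hc : W.IsChain (· ≠ ·)) (i : Fin (D + 1)) : Vertex d D where
  word := (W.drop i).take D
  length_eq := by simp; omega
  chain := (hc.drop _).take _

lemma adj_window {d D : ℕ} (W : List (Fin (d + 1))) (hl : W.length = 2 * D)
    (hc : W.IsChain (· ≠ ·)) (i : ℕ) (hi : i + 1 < D + 1) :
    Adj (window W hl hc ⟨i, by omega⟩) (window W hl hc ⟨i + 1, hi⟩) := by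
  refine ⟨(W.drop i).take (D + 1), by simp; omega, (hc.drop _).take _, ?_, ?_⟩
  · simp only [window, List.dropLast_eq_take, List.take_take]
    congr 1
    simp
    omega
  · simp only [window, ← List.drop_one, List.drop_take, List.drop_drop]
    rfl

lemma isWalk_window {d D : ℕ} (W : List (Fin (d + 1))) (hl : W.length = 2 * D)
    (hc : W.IsChain (· ≠ ·)) :
    IsWalk (List.ofFn (window W hl hc)) (window W hl hc 0) (window W hl hc (Fin.last D)) := by
  refine ⟨by simp [List.ofFn_succ], ?_, ?_⟩
  · rw [List.getLast?_eq_getElem?, List.length_ofFn, List.getElem?_ofFn]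
    simp [Fin.last]
  · refine List.isChain_iff_getElem.2 fun i hi => ?_
    simp only [List.getElem_ofFn]
    exact adj_window W hl hc i (by simpa using hi)

/-- `W` has a square of period `r` whose centre is at position `D`. It is meant for `r ≤ D`,
where the subtraction does not truncate, and `D + r ≤ W.length`. -/
def CentralSquare {α : Type*} (W : List α) (D r : ℕ) : Prop :=
  ∀ i < r, W[D - r + i]? = W[D + i]?

/-- `W` has no square, of any period from `1` to `D`, centred at position `D`. -/
def NoCentralSquare {α : Type*} (W : List α) (D : ℕ) : Prop :=
  ∀ r, 1 ≤ r → r ≤ D → ¬ CentralSquare W D r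

lemma dist_window {d D : ℕ} (W : List (Fin (d + 1))) (hl : W.length = 2 * D)
    (hc : W.IsChain (· ≠ ·)) (h : NoCentralSquare W D) :
    dist (window W hl hc 0) (window W hl hc (Fin.last D)) = D := by
  have hmem : D ∈ {k | ∃ p : List (Vertex d D),
      IsWalk p (window W hl hc 0) (window W hl hc (Fin.last D)) ∧ p.length = k + 1} :=
    ⟨_, isWalk_window W hl hc, by simp⟩
  refine le_antisymm (Nat.sInf_le hmem) ?_
  by_contra! hlt
  obtain ⟨p, hp, hpl⟩ := Nat.sInf_mem ⟨D, hmem⟩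
  change p.length = dist _ _ + 1 at hpl
  change dist _ _ < D at hlt
  generalize dist (window W hl hc 0) (window W hl hc (Fin.last D)) = k at hpl hlt
  have hw := word_drop_eq_of_isWalk hp hpl
  refine h (D - k) (by omega) (by omega) fun i hi => ?_
  have hi' := congrArg (fun l => l[i]?) hw
  simp only [window, List.getElem?_drop, List.getElem?_take, Fin.val_zero, Fin.val_last] at hi'
  rw [if_pos (by omega), if_pos hi, if_pos (by omega)] at hi'
  rw [← hi']
  congr 1
  omega

/-! ### Central squares of `P ++ w ++ S` -/

/-- In an unbordered square-free `w`, the only possible periods of a central square of a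
word `W` that carries `w` at position `t - 1` are those in `Rt w t`. -/
lemma CentralSquare.mem_Rt {α : Type*} {W w : List α} {D t r : ℕ} (hw : w.length = D + 1)
    (hub : Unbordered w) (hsf : SquareFree w) (ht1 : 1 ≤ t) (ht2 : 2 * t ≤ D + 1)
    (hW : ∀ i < D + 1, W[t - 1 + i]? = w[i]?) (hr1 : 1 ≤ r) (hrD : r ≤ D)
    (h : CentralSquare W D r) : r ∈ Rt w t := by
  -- the central square, read in the coordinates of `w` wherever both letters lie in `w`
  have key : ∀ m, D + 1 - t ≤ m + r → m + t < D + 1 → m + r < D + 1 → w[m]? = w[m + r]? := by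
    intro m h1 h2 h3
    have := h (t - 1 + m + r - D) (by omega)
    rw [show D - r + (t - 1 + m + r - D) = t - 1 + m by omega,
      show D + (t - 1 + m + r - D) = t - 1 + (m + r) by omega, hW _ (by omega),
      hW _ (by omega)] at this
    exact this
  have hrt : t < r := by
    by_contra! hle
    refine hsf ⟨(w.drop (D + 1 - t - r)).take r, ?_, ?_⟩
    · rw [← List.length_pos_iff]
      simp
      omega
    · have e : (w.drop (D + 1 - t - r)).take r
          = ((w.drop (D + 1 - t - r)).drop r).take r := by
        refine List.ext_getElem? fun i => ?_
        simp only [List.getElem?_take, List.getElem?_drop]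
        split_ifs with hi
        · rw [key _ (by omega) (by omega) (by omega)]
          congr 1
          omega
        · rfl
      have e2 : (w.drop (D + 1 - t - r)).take r ++ (w.drop (D + 1 - t - r)).take r
          = (w.drop (D + 1 - t - r)).take (r + r) := by
        rw [List.take_add, ← e]
      rw [e2]
      exact (List.take_prefix _ _).isInfix.trans (List.drop_suffix _ _).isInfix
  have hrlt : r ≤ D - t := by
    by_contra! hgt
    refine hub ⟨D + 1 - r, by omega, by omega, ?_⟩
    refine List.ext_getElem? fun i => ?_
    simp only [List.getElem?_take, List.getElem?_drop]
    split_ifs with hi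
    · rw [key _ (by omega) (by omega) (by omega)]
      congr 1
      omega
    · rw [eq_comm, List.getElem?_eq_none]
      omega
  refine Finset.mem_filter.2 ⟨Finset.mem_Icc.2 ⟨hrt, by omega⟩,
    w.take (D + 1 - t - r), (w.drop (D + 1 - r)).take (r - t), ?_, ?_, ?_⟩
  · rw [← List.length_pos_iff]
    simp
    omega
  · have e : (w.drop (D + 1 - t - r)).take t = suffixWord w t := by
      refine List.ext_getElem? fun i => ?_
      simp only [suffixWord, List.getElem?_take, List.getElem?_drop]
      split_ifs with hi
      · rw [key _ (by omega) (by omega) (by omega)]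
        congr 1
        omega
      · rw [eq_comm, List.getElem?_eq_none]
        omega
    have e' : w.take (D + 1 - t - r) ++ suffixWord w t = w.take (D + 1 - t - r + t) := by
      rw [← e, List.take_add]
    rw [e', suffixWord,
      show w.drop (D + 1 - r) = w.drop (D + 1 - t - r + t) by congr 1; omega, ← List.take_add,
      show D + 1 - t - r + t + (r - t) = w.length - t by omega, List.take_append_drop]
  · simp
    omega

/-- For `r > t`, a central square of period `r` forces the first `r - t` letters after `w`. -/
lemma CentralSquare.take_right {α : Type*} {P w S : List α} {D t r : ℕ}
    (hw : w.length = D + 1) (hP : P.length = t - 1) (ht1 : 1 ≤ t)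
    (htr : t < r) (hrD : r ≤ D) (h : CentralSquare (P ++ w ++ S) D r) :
    S.take (r - t) = (w.drop (D + 1 - r)).take (r - t) := by
  refine List.ext_getElem? fun i => ?_
  simp only [List.getElem?_take, List.getElem?_drop]
  split_ifs with hi
  · have := h (t + i) (by omega)
    rw [List.getElem?_append_left (by simp; omega), List.getElem?_append_right (by omega),
      List.getElem?_append_right (by simp; omega)] at this
    rw [show D + 1 - r + i = D - r + (t + i) - P.length by omega, this]
    congr 1
    simp
    omega
  · rfl

lemma Edge.word_spec {d D : ℕ} (hD : 1 ≤ D) (e : Edge d D) :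
    e.word.length = D + 1 ∧ e.word.IsChain (· ≠ ·) ∧
      e.src.word = e.word.take D ∧ e.tgt.word = e.word.drop 1 := by
  obtain ⟨z, hl, hc, hs, ht⟩ := e.adj
  have hz : e.word = z := by
    rw [Edge.word, hs, ht, List.dropLast_eq_take, ← List.drop_one, List.drop_drop, hl,
      show 1 + (D - 1) = D + 1 - 1 by omega, List.take_append_drop]
  rw [hz]
  refine ⟨hl, hc, ?_, ?_⟩
  · rw [hs, List.dropLast_eq_take, hl, Nat.add_sub_cancel]
  · rw [ht, List.drop_one]

/-! ### Counting -/

/-- The words `P ++ w ++ S` with `|P| = m` and `|S| = n`, indexed by the binary choices made to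
the left (read outwards) and to the right of `w`. -/
def around (w : List (Fin 3)) (hne : w ≠ []) {m n : ℕ}
    (c : List.Vector Bool m × List.Vector Bool n) : List (Fin 3) :=
  (extend (w.head hne) c.1.toList).reverse ++ w ++ extend (w.getLast hne) c.2.toList

lemma around_injective (w : List (Fin 3)) (hne : w ≠ []) (m n : ℕ) :
    Function.Injective (around w hne (m := m) (n := n)) := by
  intro c c' h
  have h1 := c.1.toList_length
  have h1' := c'.1.toList_length
  have h2 := c.2.toList_length
  have h2' := c'.2.toList_length
  obtain ⟨ha, hb⟩ := List.append_inj h (by simp [h1, h1'])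
  obtain ⟨ha, -⟩ := List.append_inj ha (by simp [h1, h1'])
  exact Prod.ext (List.Vector.toList_injective (extend_injective _ (List.reverse_injective ha)))
    (List.Vector.toList_injective (extend_injective _ hb))

lemma card_centralSquare_le {w : List (Fin 3)} (hne : w ≠ []) {D t r : ℕ}
    (hw : w.length = D + 1) (ht1 : 1 ≤ t) (htr : t < r) (hrD : r ≤ D) :
    (Finset.univ.filter fun c : List.Vector Bool (t - 1) × List.Vector Bool (D - t) =>
      CentralSquare (around w hne c) D r).card ≤ 2 ^ ((t - 1) + (D - r)) := by
  have hcard : Fintype.card (List.Vector Bool (t - 1) × List.Vector Bool (D - r))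
      = 2 ^ ((t - 1) + (D - r)) := by
    rw [Fintype.card_prod, card_vector, card_vector, Fintype.card_bool, pow_add]
  rw [← hcard, ← Finset.card_univ]
  -- the choices for the forced letters carry no information, so they can be dropped
  refine Finset.card_le_card_of_injOn
    (fun c => (c.1, ⟨c.2.toList.drop (r - t), by have := c.2.toList_length; simp; omega⟩)) (by simp) ?_
  intro c hc c' hc' h
  have hl : c.1 = c'.1 := congrArg (fun q => q.1) h
  have hr : c.2.toList.drop (r - t) = c'.2.toList.drop (r - t) :=
    congrArg (fun q => q.2.toList) h
  simp only [Finset.coe_filter, Finset.mem_univ, true_and, Set.mem_ofPred_eq] at hc hc'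
  have e1 := CentralSquare.take_right hw (by simp [c.1.toList_length]) ht1 htr hrD hc
  have e2 := CentralSquare.take_right hw (by simp [c'.1.toList_length]) ht1 htr hrD hc'
  rw [← e2, ← extend_take, ← extend_take] at e1
  have e3 := extend_injective _ e1
  refine Prod.ext hl (List.Vector.toList_injective ?_)
  rw [← List.take_append_drop (r - t) c.2.toList, e3, hr, List.take_append_drop]

/-- Every word around `e` without a central square contributes its own pair to `N e D t`. -/
lemma card_le_N {D t : ℕ} (e : Edge 2 D) (hne : e.word ≠ []) (ht1 : 1 ≤ t) (htD : t ≤ D) :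
    (Finset.univ.filter fun c : List.Vector Bool (t - 1) × List.Vector Bool (D - t) =>
      NoCentralSquare (around e.word hne c) D).card ≤ N e D t := by
  obtain ⟨hl, hc, hs, hg⟩ := e.word_spec (ht1.trans htD)
  have hlen : ∀ c : List.Vector Bool (t - 1) × List.Vector Bool (D - t),
      (around e.word hne c).length = 2 * D := by
    intro c
    have h1 := c.1.toList_length
    have h2 := c.2.toList_length
    simp only [around, List.length_append, List.length_reverse, length_extend]
    omega
  have hch : ∀ c : List.Vector Bool (t - 1) × List.Vector Bool (D - t),
      (around e.word hne c).IsChain (· ≠ ·) := fun c => isChain_extend_append hc hne _ _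
  rw [N, ← Set.ncard_coe_finset]
  refine Set.ncard_le_ncard_of_injOn
    (fun c => (window _ (hlen c) (hch c) 0, window _ (hlen c) (hch c) (Fin.last D)))
    ?_ ?_ (Set.toFinite _)
  · intro c hcc
    simp only [Finset.coe_filter, Finset.mem_univ, true_and, Set.mem_ofPred_eq] at hcc
    refine ⟨dist_window _ (hlen c) (hch c) hcc, _, isWalk_window _ (hlen c) (hch c), by simp, ?_, ?_⟩
    · rw [List.getElem?_ofFn, dif_pos (by omega)]
      congr 1
      apply Vertex.word_injective
      have h1 := c.1.toList_length
      simp only [window, hs, around, List.append_assoc]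
      rw [List.drop_append_of_le_length (by simp [h1]), List.drop_of_length_le (by simp [h1]),
        List.nil_append, List.take_append_of_le_length (by omega)]
    · rw [List.getElem?_ofFn, dif_pos (by omega)]
      congr 1
      apply Vertex.word_injective
      have h1 := c.1.toList_length
      simp only [window, hg, around, List.append_assoc]
      have h2 : t - (extend (e.word.head hne) c.1.toList).reverse.length = 1 := by
        simp [h1]
        omega
      rw [List.drop_append, List.drop_of_length_le (by omega), List.nil_append, h2,
        List.drop_append_of_le_length (by omega),
        List.take_append_of_le_length (by simp [hl]), List.take_of_length_le (by simp [hl])]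
  · intro c _ c' _ h
    refine around_injective _ hne _ _ ?_
    have e1 := congrArg (fun q => q.1.word ++ q.2.word) h
    simp only [window, Fin.val_zero, Fin.val_last, List.drop_zero] at e1
    rwa [List.take_of_length_le (l := (around e.word hne c).drop D) (by simp [hlen]; omega),
      List.take_of_length_le (l := (around e.word hne c').drop D) (by simp [hlen]; omega),
      List.take_append_drop, List.take_append_drop] at e1

end Kautz

/-- If `e` is a directed edge of `K(2,D)` whose edge-word is unbordered and
square-free, and `1 ≤ t` with `2t ≤ D+1`, then
`Δ_t(e) ≤ ∑_{r ∈ R_t(w(e))} 2^{D−1−(r−t)}`. -/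
theorem statement12 (D : ℕ) (e : Kautz.Edge 2 D)
    (hub : Kautz.Unbordered e.word) (hsf : Kautz.SquareFree e.word)
    (t : ℕ) (ht1 : 1 ≤ t) (ht2 : 2 * t ≤ D + 1) :
    Kautz.deficit e t
      ≤ ∑ r ∈ Kautz.Rt e.word t, (2 : ℝ) ^ ((D : ℤ) - 1 - ((r : ℤ) - (t : ℤ))) := by
  have htD : t ≤ D := by omega
  obtain ⟨hl, -, -, -⟩ := e.word_spec (ht1.trans htD)
  have hne : e.word ≠ [] := by
    rw [← List.length_pos_iff]
    omega
  have hcover : (Finset.univ : Finset (List.Vector Bool (t - 1) × List.Vector Bool (D - t))) ⊆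
      (Finset.univ.filter fun c => Kautz.NoCentralSquare (Kautz.around e.word hne c) D) ∪
      (Kautz.Rt e.word t).biUnion fun r =>
        Finset.univ.filter fun c => Kautz.CentralSquare (Kautz.around e.word hne c) D r := by
    intro c _
    by_cases hc : Kautz.NoCentralSquare (Kautz.around e.word hne c) D
    · exact Finset.mem_union_left _ (Finset.mem_filter.2 ⟨Finset.mem_univ _, hc⟩)
    · rw [Kautz.NoCentralSquare] at hc
      push Not at hc
      obtain ⟨r, hr1, hrD, hr⟩ := hc
      refine Finset.mem_union_right _ (Finset.mem_biUnion.2 ⟨r, ?_, by simpa using hr⟩)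
      refine hr.mem_Rt hl hub hsf ht1 ht2 (fun i hi => ?_) hr1 hrD
      have h1 := c.1.toList_length
      rw [Kautz.around, List.getElem?_append_left (by simp [h1]; omega),
        List.getElem?_append_right (by simp [h1])]
      simp [h1]
  have hcard := (Finset.card_le_card hcover).trans
    ((Finset.card_union_le _ _).trans
      (add_le_add (Kautz.card_le_N e hne ht1 htD) Finset.card_biUnion_le))
  rw [Finset.card_univ, Fintype.card_prod, card_vector, card_vector, Fintype.card_bool, ← pow_add,
    show t - 1 + (D - t) = D - 1 by omega] at hcard
  have hcard' : (2 : ℝ) ^ (D - 1) ≤ Kautz.N e D t + ∑ r ∈ Kautz.Rt e.word t,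
      ((Finset.univ.filter fun c : List.Vector Bool (t - 1) × List.Vector Bool (D - t) =>
        Kautz.CentralSquare (Kautz.around e.word hne c) D r).card : ℝ) := by
    exact_mod_cast hcard
  rw [Kautz.deficit, sub_le_iff_le_add']
  refine (le_of_eq (by norm_num)).trans (hcard'.trans (add_le_add_right ?_ _))
  refine Finset.sum_le_sum fun r hr => ?_
  have hr' := Finset.mem_Icc.1 (Finset.mem_filter.1 hr).1
  rw [show (D : ℤ) - 1 - ((r : ℤ) - (t : ℤ)) = ((t - 1 + (D - r) : ℕ) : ℤ) by omega, zpow_natCast]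
  exact_mod_cast Kautz.card_centralSquare_le hne hl ht1 (by omega) (by omega)
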